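/- arXiv:1208.4341 — 2 statements merged into one kernel-verified Lean document; each statement's English description precedes it below -/
import Mathlib

section
/- (Equivalence of dynamic user equilibrium and the variational inequality, Friesz et al. 1993, as stated in the paper.) Let h* ∈ Λ₀ and suppose for each p ∈ P an effective path delay Ψ_p(·,h*) ∈ L²[t0,tf] with Ψ_p(t,h*) ≥ 0 for a.e. t is given; set v_ij = min_{p∈P_ij} essinf_{t∈[t0,tf]} Ψ_p(t,h*). Then h* is a dynamic user equilibrium if and only if h* solves the variational inequality VI(Ψ,Λ₀): ∑_{p∈P} ∫_{t0}^{tf} Ψ_p(t,h*)(h_p(t) − h*_p(t)) dt ≥ 0 for all h ∈ Λ₀. -/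
open MeasureTheory

/-- Lebesgue measure restricted to the planning horizon `[t0, tf]`. -/
noncomputable def timeMeasure (t0 tf : ℝ) : Measure ℝ :=
  volume.restrict (Set.Icc t0 tf)

/-- The feasible set of path flows `Λ₀ ⊆ (L²[t0,tf])^{|P|}`. -/
noncomputable def Lambda0 (t0 tf : ℝ) {W ι : Type} [Fintype ι] [DecidableEq W]
    (od : ι → W) (Q : W → ℝ) :
    Set (PiLp 2 fun _ : ι => Lp ℝ 2 (timeMeasure t0 tf)) :=
  {h | (∀ p, ∀ᵐ t ∂(timeMeasure t0 tf), 0 ≤ (h p) t) ∧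
    ∀ w, ∑ p ∈ Finset.univ.filter fun p => od p = w,
        ∫ t, (h p) t ∂(timeMeasure t0 tf) = Q w}

section Helpers

variable {μ : Measure ℝ}

theorem due_mul_integrable (f g : Lp ℝ 2 μ) : Integrable (fun t => f t * g t) μ := by
  have h := L2.integrable_inner (𝕜 := ℝ) g f
  simpa using h

theorem due_inner (f g : Lp ℝ 2 μ) : inner ℝ f g = ∫ t, f t * g t ∂μ := by
  rw [L2.inner_def]
  refine integral_congr_ae (Filter.Eventually.of_forall fun t => ?_)
  simp [mul_comm]

theorem due_inner_sub (f g k : Lp ℝ 2 μ) :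
    ∫ t, f t * (g t - k t) ∂μ = inner ℝ f g - inner ℝ f k := by
  rw [due_inner, due_inner, ← integral_sub (due_mul_integrable f g) (due_mul_integrable f k)]
  simp only [mul_sub]

theorem due_integral [IsFiniteMeasure μ] (g : Lp ℝ 2 μ) :
    ∫ t, g t ∂μ = inner ℝ (Lp.const 2 μ (1 : ℝ)) g := by
  rw [due_inner]
  refine integral_congr_ae ?_
  filter_upwards [Lp.coeFn_const (p := 2) (μ := μ) (1 : ℝ)] with t h
  rw [h, Function.const_apply, one_mul]

theorem due_integrable [IsFiniteMeasure μ] (g : Lp ℝ 2 μ) : Integrable (fun t => g t) μ :=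
  (Lp.memLp g).integrable (by norm_num)

theorem due_cobdd [NeZero μ] (f : ℝ → ℝ) :
    Filter.IsCoboundedUnder (· ≥ ·) (ae μ) f := by
  have : ∃ N : ℕ, ∃ᶠ t in ae μ, f t ≤ N := by
    by_contra h
    simp only [not_exists, Filter.not_frequently, not_le] at h
    obtain ⟨t, ht⟩ := (ae_all_iff.2 h).exists
    obtain ⟨n, hn⟩ := exists_nat_gt (f t)
    exact absurd (ht n) (not_lt.2 hn.le)
  obtain ⟨N, hN⟩ := this
  exact Filter.IsCoboundedUnder.of_frequently_le hN

theorem due_freq [NeZero μ] (f : ℝ → ℝ) (b : ℝ) (h : essInf f μ < b) :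
    μ {t | f t < b} ≠ 0 := by
  have := Filter.frequently_lt_of_liminf_lt (due_cobdd f) h
  exact frequently_ae_iff.1 this

theorem due_le (f : ℝ → ℝ) (hf : ∀ᵐ t ∂μ, 0 ≤ f t) : ∀ᵐ t ∂μ, essInf f μ ≤ f t :=
  ae_essInf_le ⟨0, by simpa using hf⟩

end Helpers

instance due_fin (t0 tf : ℝ) : IsFiniteMeasure (timeMeasure t0 tf) := by
  unfold timeMeasure; infer_instance

theorem due_ne (t0 tf : ℝ) (ht : t0 < tf) : NeZero (timeMeasure t0 tf) := by
  refine ⟨fun h => ?_⟩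
  have := congrArg (fun m => m Set.univ) h
  simp [timeMeasure] at this
  linarith

/-- Key estimate: a solution of the VI carries no flow where the delay exceeds `v + ε`. -/
theorem due_key
    (t0 tf : ℝ) (ht : t0 < tf) (W ι : Type) [DecidableEq W] [Fintype ι]
    (od : ι → W) (Q : W → ℝ)
    (hstar : PiLp 2 fun _ : ι => Lp ℝ 2 (timeMeasure t0 tf))
    (hmem : hstar ∈ Lambda0 t0 tf od Q)
    (Ψ : ι → Lp ℝ 2 (timeMeasure t0 tf)) (p q : ι) (hpq : od p = od q) (x : ℝ)
    (hx : x = essInf (fun t => (Ψ q) t) (timeMeasure t0 tf))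
    (hVI : ∀ h ∈ Lambda0 t0 tf od Q,
        0 ≤ ∑ p, ∫ t, (Ψ p) t * ((h p) t - (hstar p) t) ∂(timeMeasure t0 tf))
    (ε : ℝ) (hε : 0 < ε) :
    ∀ᵐ t ∂(timeMeasure t0 tf), x + ε < (Ψ p) t → (hstar p) t = 0 := by
  classical
  have := due_ne t0 tf ht
  let A : Set ℝ := {t | x + ε < (Ψ p) t}
  let B : Set ℝ := {t | (Ψ q) t < x + ε / 2}
  have hA : MeasurableSet A := measurableSet_lt measurable_const (Lp.stronglyMeasurable _).measurable
  have hB : MeasurableSet B := measurableSet_lt (Lp.stronglyMeasurable _).measurable measurable_const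
  have hB0 : (timeMeasure t0 tf) B ≠ 0 := due_freq _ _ (by linarith)
  have hB1 : 0 < (timeMeasure t0 tf).real B := ENNReal.toReal_pos hB0 (measure_ne_top _ _)
  obtain ⟨hnn, hsum⟩ := hmem
  let m : ℝ := ∫ t in A, (hstar p) t ∂(timeMeasure t0 tf)
  have hm : 0 ≤ m := integral_nonneg_of_ae (ae_restrict_of_ae (hnn p))
  let c : ℝ := m / (timeMeasure t0 tf).real B
  have hc : 0 ≤ c := by positivity
  let g1 : Lp ℝ 2 (timeMeasure t0 tf) := ((Lp.memLp (hstar p)).indicator hA).toLp _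
  have hg1 : g1 =ᵐ[timeMeasure t0 tf] A.indicator (hstar p) := MemLp.coeFn_toLp _
  let g2 : Lp ℝ 2 (timeMeasure t0 tf) := indicatorConstLp 2 hB (measure_ne_top _ _) c
  have hg2 : g2 =ᵐ[timeMeasure t0 tf] B.indicator (fun _ => c) := indicatorConstLp_coeFn
  have ig1 : ∫ t, g1 t ∂(timeMeasure t0 tf) = m := by
    rw [integral_congr_ae hg1, integral_indicator hA]
  have ig2 : ∫ t, g2 t ∂(timeMeasure t0 tf) = m := by
    rw [integral_congr_ae hg2, integral_indicator hB]
    simp only [integral_const, smul_eq_mul, c, measureReal_restrict_apply_univ]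
    field_simp
  let H : ι → Lp ℝ 2 (timeMeasure t0 tf) := fun r =>
    hstar r - (if r = p then g1 else 0) + (if r = q then g2 else 0)
  let h : PiLp 2 fun _ : ι => Lp ℝ 2 (timeMeasure t0 tf) := WithLp.toLp 2 H
  have hH : ∀ r, h r = H r := fun r => rfl
  have key : h ∈ Lambda0 t0 tf od Q := by
    refine ⟨fun r => ?_, fun w => ?_⟩
    · rw [hH]
      have e1 : ∀ᵐ t ∂(timeMeasure t0 tf), 0 ≤ (hstar r - (if r = p then g1 else 0) : Lp ℝ 2 (timeMeasure t0 tf)) t := by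
        split_ifs with h1
        · subst h1
          filter_upwards [Lp.coeFn_sub (hstar r) g1, hg1, hnn r] with t a b d
          rw [a, Pi.sub_apply, b]
          by_cases hh : t ∈ A <;> simp [hh, d]
        · rw [sub_zero]; exact hnn r
      have e2 : ∀ᵐ t ∂(timeMeasure t0 tf), 0 ≤ (if r = q then g2 else 0 : Lp ℝ 2 (timeMeasure t0 tf)) t := by
        split_ifs with h1
        · filter_upwards [hg2] with t b
          rw [b]
          exact Set.indicator_nonneg (fun _ _ => hc) t
        · filter_upwards [Lp.coeFn_zero ℝ 2 (timeMeasure t0 tf)] with t b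
          rw [b]; simp
      filter_upwards [e1, e2, Lp.coeFn_add (hstar r - (if r = p then g1 else 0) : Lp ℝ 2 (timeMeasure t0 tf))
        (if r = q then g2 else 0)] with t a b d
      change 0 ≤ (hstar r - (if r = p then g1 else 0) + (if r = q then g2 else 0) : Lp ℝ 2 (timeMeasure t0 tf)) t
      rw [d, Pi.add_apply]
      exact add_nonneg a b
    · rw [← hsum w]
      have e : ∀ r, ∫ t, (h r) t ∂(timeMeasure t0 tf) = ∫ t, (hstar r) t ∂(timeMeasure t0 tf) - (if r = p then m else 0)
          + (if r = q then m else 0) := by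
        intro r
        rw [hH, due_integral, due_integral]
        simp only [H, inner_add_right, inner_sub_right]
        rw [apply_ite (inner ℝ (Lp.const 2 (timeMeasure t0 tf) (1 : ℝ))), apply_ite (inner ℝ (Lp.const 2 (timeMeasure t0 tf) (1 : ℝ))),
          ← due_integral, ← due_integral, ← due_integral g2, ig1, ig2, inner_zero_right]
      rw [Finset.sum_congr rfl (fun r _ => e r), Finset.sum_add_distrib, Finset.sum_sub_distrib,
        Finset.sum_ite_eq', Finset.sum_ite_eq']
      simp [hpq]
  have h0 := hVI h key
  have e : ∀ r, ∫ t, (Ψ r) t * ((h r) t - (hstar r) t) ∂(timeMeasure t0 tf) =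
      (if r = q then inner ℝ (Ψ q) g2 else 0) - (if r = p then inner ℝ (Ψ p) g1 else 0) := by
    intro r
    rw [due_inner_sub, hH]
    simp only [H, inner_add_right, inner_sub_right]
    have t1 : inner ℝ (Ψ r) (if r = p then g1 else 0) =
        if r = p then inner ℝ (Ψ p) g1 else 0 := by
      split_ifs with h1
      · rw [h1]
      · exact inner_zero_right _
    have t2 : inner ℝ (Ψ r) (if r = q then g2 else 0) =
        if r = q then inner ℝ (Ψ q) g2 else 0 := by
      split_ifs with h1
      · rw [h1]
      · exact inner_zero_right _
    rw [t1, t2]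
    ring
  rw [Finset.sum_congr rfl (fun r _ => e r), Finset.sum_sub_distrib,
        Finset.sum_ite_eq', Finset.sum_ite_eq'] at h0
  simp only [Finset.mem_univ, if_true] at h0
  have b1 : (x + ε) * m ≤ inner ℝ (Ψ p) g1 := by
    rw [due_inner, ← ig1, ← integral_const_mul]
    refine integral_mono_ae ((due_integrable g1).const_mul _) (due_mul_integrable _ _) ?_
    filter_upwards [hg1, hnn p] with t a b
    simp only [a]
    by_cases hh : t ∈ A
    · simp only [hh, Set.indicator_of_mem]
      exact mul_le_mul_of_nonneg_right (le_of_lt hh) b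
    · simp [hh]
  have b2 : inner ℝ (Ψ q) g2 ≤ (x + ε / 2) * m := by
    rw [due_inner, ← ig2, ← integral_const_mul]
    refine integral_mono_ae (due_mul_integrable _ _) ((due_integrable g2).const_mul _) ?_
    filter_upwards [hg2] with t a
    simp only [a]
    by_cases hh : t ∈ B
    · simp only [hh, Set.indicator_of_mem]
      exact mul_le_mul_of_nonneg_right (le_of_lt hh) hc
    · simp [hh]
  have hm0 : m = 0 := by nlinarith
  have := (setIntegral_eq_zero_iff_of_nonneg_ae (ae_restrict_of_ae (hnn p))
    (due_integrable (hstar p)).integrableOn).1 hm0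
  rw [Filter.EventuallyEq, ae_restrict_iff' hA] at this
  exact this

/-- **Equivalence of dynamic user equilibrium and the variational inequality**
(Friesz et al. 1993).  Here `Ψ p` is the (nonnegative, `L²`) effective delay of
path `p` evaluated at the fixed flow `h*`, and `v w` is the minimum over paths
`p` connecting OD pair `w` of the essential infimum of `Ψ p`.  Then `h*` is a
dynamic user equilibrium iff it solves `VI(Ψ, Λ₀)`. -/
theorem due_iff_variational_inequality
    (t0 tf : ℝ) (ht : t0 < tf)
    (W ι : Type) [Fintype W] [Nonempty W] [DecidableEq W] [Fintype ι]
    (od : ι → W) (hod : Function.Surjective od)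
    (Q : W → ℝ) (hQ : ∀ w, 0 ≤ Q w)
    (hstar : PiLp 2 fun _ : ι => Lp ℝ 2 (timeMeasure t0 tf))
    (hmem : hstar ∈ Lambda0 t0 tf od Q)
    (Ψ : ι → Lp ℝ 2 (timeMeasure t0 tf))
    (hΨ : ∀ p, ∀ᵐ t ∂(timeMeasure t0 tf), 0 ≤ (Ψ p) t)
    (v : W → ℝ)
    (hv : ∀ w, IsLeast
      {x : ℝ | ∃ p, od p = w ∧ x = essInf (fun t => (Ψ p) t) (timeMeasure t0 tf)}
      (v w)) :
    (∀ p, ∀ᵐ t ∂(timeMeasure t0 tf), 0 < (hstar p) t → (Ψ p) t = v (od p)) ↔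
    (∀ h ∈ Lambda0 t0 tf od Q,
        0 ≤ ∑ p, ∫ t, (Ψ p) t * ((h p) t - (hstar p) t) ∂(timeMeasure t0 tf)) := by
  have hle : ∀ p, ∀ᵐ t ∂(timeMeasure t0 tf), v (od p) ≤ (Ψ p) t := by
    intro p
    filter_upwards [due_le _ (hΨ p)] with t a
    exact ((hv (od p)).2 ⟨p, rfl, rfl⟩).trans a
  constructor
  · intro hD h hh
    have hs : ∀ k ∈ Lambda0 t0 tf od Q,
        ∑ p, v (od p) * ∫ t, (k p) t ∂(timeMeasure t0 tf) = ∑ w, v w * Q w := by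
      intro k hk
      rw [← Finset.sum_fiberwise (s := Finset.univ) (g := od)]
      refine Finset.sum_congr rfl fun w _ => ?_
      rw [← hk.2 w, Finset.mul_sum]
      refine Finset.sum_congr rfl fun p hp => ?_
      rw [(Finset.mem_filter.1 hp).2]
    have hz : 0 = ∑ p, (v (od p) * ∫ t, (h p) t ∂(timeMeasure t0 tf)
        - v (od p) * ∫ t, (hstar p) t ∂(timeMeasure t0 tf)) := by
      rw [Finset.sum_sub_distrib, hs h hh, hs hstar hmem, sub_self]
    rw [hz]
    refine Finset.sum_le_sum fun p _ => ?_
    rw [due_inner_sub, due_inner, due_inner]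
    refine sub_le_sub ?_ (le_of_eq ?_)
    · rw [← integral_const_mul]
      refine integral_mono_ae ((due_integrable (h p)).const_mul _) (due_mul_integrable _ _) ?_
      filter_upwards [hle p, hh.1 p] with t a b
      exact mul_le_mul_of_nonneg_right a b
    · rw [← integral_const_mul]
      refine integral_congr_ae ?_
      filter_upwards [hD p, hmem.1 p] with t a b
      rcases b.eq_or_lt with b | b
      · simp [← b]
      · simp [a b]
  · intro hVI p
    obtain ⟨q, hq, hx⟩ := (hv (od p)).1
    have hk : ∀ n : ℕ, ∀ᵐ t ∂(timeMeasure t0 tf),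
        v (od p) + 1 / ((n : ℝ) + 1) < (Ψ p) t → (hstar p) t = 0 := fun n =>
      due_key t0 tf ht W ι od Q hstar hmem Ψ p q hq.symm (v (od p)) hx hVI _ (by positivity)
    filter_upwards [ae_all_iff.2 hk, hle p] with t a b hpos
    by_contra hne
    have hlt : v (od p) < (Ψ p) t := lt_of_le_of_ne b (Ne.symm hne)
    obtain ⟨n, hn⟩ := exists_nat_one_div_lt (sub_pos.2 hlt)
    exact hpos.ne' (a n (by linarith))
end

section
/- (Complementarity reformulation of the variational inequality constraint.) Let c_p ∈ L²[t0,tf] with c_p(t) ≥ 0 for a.e. t, for each p ∈ P (for instance, the tolled effective delay c_p(t) = Ψ_p(t,h*) + ∑_a δ_{a,p} 𝒴_a evaluated at a fixed h*). Then h* ∈ Λ₀ satisfies ∑_{p∈P} ∫_{t0}^{tf} c_p(t)(h_p(t) − h*_p(t)) dt ≥ 0 for all h ∈ Λ₀ if and only if there exist real numbers μ_ij, (i,j) ∈ W, such that for every (i,j) ∈ W and every p ∈ P_ij: c_p(t) − μ_ij ≥ 0 for a.e. t ∈ [t0,tf], and (c_p(t) − μ_ij)·h*_p(t) = 0 for a.e.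 t ∈ [t0,tf]. -/
open MeasureTheory

instance timeMeasure_finite (t0 tf : ℝ) : IsFiniteMeasure (timeMeasure t0 tf) := by
  unfold timeMeasure; infer_instance

theorem Lp_integrable {t0 tf : ℝ} (f : Lp ℝ 2 (timeMeasure t0 tf)) :
    Integrable (fun t => f t) (timeMeasure t0 tf) :=
  (Lp.memLp f).integrable (by norm_num)

theorem Lp_mul_integrable {t0 tf : ℝ} (f g : Lp ℝ 2 (timeMeasure t0 tf)) :
    Integrable (fun t => f t * g t) (timeMeasure t0 tf) :=
  (Lp.memLp f).integrable_mul (Lp.memLp g)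

theorem perturb {t0 tf : ℝ} {W ι : Type} [DecidableEq W] [Fintype ι]
    {od : ι → W} {Q : W → ℝ}
    {hstar : PiLp 2 fun _ : ι => Lp ℝ 2 (timeMeasure t0 tf)}
    (hmem : hstar ∈ Lambda0 t0 tf od Q)
    {c : ι → Lp ℝ 2 (timeMeasure t0 tf)}
    (hVI : ∀ h ∈ Lambda0 t0 tf od Q,
        0 ≤ ∑ p, ∫ t, (c p) t * ((h p) t - (hstar p) t) ∂(timeMeasure t0 tf))
    {p q : ι} (hpq : od p = od q) (f g : Lp ℝ 2 (timeMeasure t0 tf))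
    (hf : ∀ᵐ t ∂(timeMeasure t0 tf), 0 ≤ f t)
    (hg0 : ∀ᵐ t ∂(timeMeasure t0 tf), 0 ≤ g t)
    (hg : ∀ᵐ t ∂(timeMeasure t0 tf), g t ≤ hstar q t)
    (hfg : ∫ t, f t ∂(timeMeasure t0 tf) = ∫ t, g t ∂(timeMeasure t0 tf)) :
    ∫ t, c q t * g t ∂(timeMeasure t0 tf) ≤ ∫ t, c p t * f t ∂(timeMeasure t0 tf) := by
  classical
  let h : PiLp 2 fun _ : ι => Lp ℝ 2 (timeMeasure t0 tf) :=
    WithLp.toLp 2 (fun r => hstar r + (if r = p then f else 0) - (if r = q then g else 0))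
  have hh : ∀ r, ∀ᵐ t ∂(timeMeasure t0 tf), h r t =
      hstar r t + (if r = p then f t else 0) - (if r = q then g t else 0) := by
    intro r
    have e : h r = hstar r + (if r = p then f else 0) - (if r = q then g else 0) := rfl
    rw [e]
    filter_upwards [Lp.coeFn_sub (hstar r + (if r = p then f else 0)) (if r = q then g else 0),
      Lp.coeFn_add (hstar r) (if r = p then f else 0),
      Lp.coeFn_zero ℝ 2 (timeMeasure t0 tf)] with t h1 h2 h3
    rw [h1, Pi.sub_apply, h2, Pi.add_apply]
    congr 1
    · congr 1
      split_ifs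
      · rfl
      · exact h3
    · split_ifs
      · rfl
      · exact h3
  have key : ∀ (k : Lp ℝ 2 (timeMeasure t0 tf)) (P : Prop) [Decidable P],
      Integrable (fun t => if P then k t else 0) (timeMeasure t0 tf) := by
    intro k P _
    split_ifs
    · exact Lp_integrable k
    · exact integrable_zero _ _ _
  have hfeas : h ∈ Lambda0 t0 tf od Q := by
    refine ⟨fun r => ?_, fun w => ?_⟩
    · filter_upwards [hh r, hf, hg, hmem.1 r] with t h1 h2 h3 h4
      rw [h1]
      by_cases hrq : r = q
      · subst hrq
        simp only [if_true]
        split_ifs <;> linarith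
      · simp only [hrq, if_false]
        split_ifs <;> linarith
    · have e : ∀ r, ∫ t, h r t ∂(timeMeasure t0 tf) = ∫ t, hstar r t ∂(timeMeasure t0 tf)
          + (if r = p then ∫ t, f t ∂(timeMeasure t0 tf) else 0)
          - (if r = q then ∫ t, g t ∂(timeMeasure t0 tf) else 0) := by
        intro r
        rw [integral_congr_ae (hh r), integral_sub (Integrable.fun_add (Lp_integrable _) (key f _)) (key g _),
          integral_add (Lp_integrable _) (key f _)]
        congr 1
        · congr 1
          split_ifs <;> simp
        · split_ifs <;> simp
      rw [Finset.sum_congr rfl (fun r _ => e r), Finset.sum_sub_distrib, Finset.sum_add_distrib,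
        Finset.sum_ite_eq', Finset.sum_ite_eq', hmem.2 w, hfg]
      simp [hpq]
  have := hVI h hfeas
  have e : ∀ r, ∫ t, c r t * (h r t - hstar r t) ∂(timeMeasure t0 tf) =
          (if r = p then ∫ t, c r t * f t ∂(timeMeasure t0 tf) else 0)
          - (if r = q then ∫ t, c r t * g t ∂(timeMeasure t0 tf) else 0) := by
    intro r
    have : ∀ᵐ t ∂(timeMeasure t0 tf), c r t * (h r t - hstar r t) =
        (if r = p then c r t * f t else 0) - (if r = q then c r t * g t else 0) := by
      filter_upwards [hh r] with t h1
      rw [h1]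
      split_ifs <;> ring
    rw [integral_congr_ae this, integral_sub]
    · congr 1 <;> split_ifs <;> simp
    · split_ifs
      · exact Lp_mul_integrable _ _
      · exact integrable_zero _ _ _
    · split_ifs
      · exact Lp_mul_integrable _ _
      · exact integrable_zero _ _ _
  rw [Finset.sum_congr rfl (fun r _ => e r), Finset.sum_sub_distrib,
    Finset.sum_ite_eq', Finset.sum_ite_eq'] at this
  simpa using this

theorem key_claim {t0 tf : ℝ} {W ι : Type} [DecidableEq W] [Fintype ι]
    {od : ι → W} {Q : W → ℝ}
    {hstar : PiLp 2 fun _ : ι => Lp ℝ 2 (timeMeasure t0 tf)}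
    (hmem : hstar ∈ Lambda0 t0 tf od Q)
    {c : ι → Lp ℝ 2 (timeMeasure t0 tf)}
    (hVI : ∀ h ∈ Lambda0 t0 tf od Q,
        0 ≤ ∑ p, ∫ t, (c p) t * ((h p) t - (hstar p) t) ∂(timeMeasure t0 tf))
    {p q : ι} (hpq : od p = od q) (a : ℝ)
    (ha : ¬ ∀ᵐ t ∂(timeMeasure t0 tf), a ≤ c p t) :
    ∀ᵐ t ∂(timeMeasure t0 tf), a ≤ c q t → hstar q t = 0 := by
  have hA : MeasurableSet {t | c p t < a} :=
    measurableSet_lt (Lp.stronglyMeasurable (c p)).measurable measurable_const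
  have hB : MeasurableSet {t | a ≤ c q t} :=
    measurableSet_le measurable_const (Lp.stronglyMeasurable (c q)).measurable
  set A := {t | c p t < a} with hAdef
  set B := {t | a ≤ c q t} with hBdef
  have hA0 : (timeMeasure t0 tf) A ≠ 0 := by
    intro h0
    apply ha
    rw [ae_iff]
    simpa [hAdef] using h0
  have hAr : 0 < (timeMeasure t0 tf).real A := ENNReal.toReal_pos hA0 (measure_ne_top _ _)
  have hgm : MemLp (B.indicator (fun t => hstar q t)) 2 (timeMeasure t0 tf) := (Lp.memLp (hstar q)).indicator hB
  set g : Lp ℝ 2 (timeMeasure t0 tf) := hgm.toLp _ with hgdef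
  have hgae : ∀ᵐ t ∂(timeMeasure t0 tf), g t = B.indicator (fun t => hstar q t) t := hgm.coeFn_toLp
  set β := ∫ t, g t ∂(timeMeasure t0 tf) with hβ
  have hg0 : ∀ᵐ t ∂(timeMeasure t0 tf), 0 ≤ g t := by
    filter_upwards [hgae, hmem.1 q] with t h1 h2
    rw [h1]
    exact Set.indicator_apply_nonneg fun _ => h2
  have hβ0 : 0 ≤ β := integral_nonneg_of_ae hg0
  set f : Lp ℝ 2 (timeMeasure t0 tf) := indicatorConstLp 2 hA (measure_ne_top (timeMeasure t0 tf) A) (β / (timeMeasure t0 tf).real A) with hfdef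
  have hfae : ∀ᵐ t ∂(timeMeasure t0 tf), f t = A.indicator (fun _ => β / (timeMeasure t0 tf).real A) t := indicatorConstLp_coeFn
  have hfint : ∫ t, f t ∂(timeMeasure t0 tf) = β := by
    rw [integral_congr_ae hfae, integral_indicator hA, setIntegral_const, smul_eq_mul]
    field_simp
  have hf0 : ∀ᵐ t ∂(timeMeasure t0 tf), 0 ≤ f t := by
    filter_upwards [hfae] with t h1
    rw [h1]
    exact Set.indicator_apply_nonneg fun _ => by positivity
  have hle := perturb hmem hVI hpq f g hf0 hg0 (by
    filter_upwards [hgae, hmem.1 q] with t h1 h2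
    rw [h1]
    exact Set.indicator_apply_le' (fun _ => le_rfl) (fun _ => h2)) hfint
  have h1 : a * β ≤ ∫ t, c q t * g t ∂(timeMeasure t0 tf) := by
    rw [hβ, ← integral_const_mul]
    apply integral_mono_ae ((Lp_integrable g).const_mul a) (Lp_mul_integrable _ _)
    filter_upwards [hgae, hg0] with t h1 h2
    by_cases htB : t ∈ B
    · exact mul_le_mul_of_nonneg_right htB h2
    · simp [h1, htB]
  have hnn : ∀ᵐ t ∂(timeMeasure t0 tf), 0 ≤ (a - c p t) * f t := by
    filter_upwards [hfae, hf0] with t h1 h2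
    by_cases htA : t ∈ A
    · exact mul_nonneg (sub_nonneg.2 (le_of_lt htA)) h2
    · simp [h1, htA]
  have hi : Integrable (fun t => (a - c p t) * f t) (timeMeasure t0 tf) := by
    simp only [sub_mul]
    exact ((Lp_integrable f).const_mul a).sub (Lp_mul_integrable _ _)
  have hz : ∫ t, (a - c p t) * f t ∂(timeMeasure t0 tf) = 0 := by
    apply le_antisymm _ (integral_nonneg_of_ae hnn)
    simp only [sub_mul]
    rw [integral_sub ((Lp_integrable f).const_mul a) (Lp_mul_integrable _ _),
      integral_const_mul, hfint]
    linarith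
  have hz' := (integral_eq_zero_iff_of_nonneg_ae hnn hi).1 hz
  have hβz : β = 0 := by
    by_contra hne
    apply hA0
    have : ∀ᵐ t ∂(timeMeasure t0 tf), t ∉ A := by
      filter_upwards [hz', hfae] with t h1 h2 htA
      simp only [Pi.zero_apply, h2, htA, Set.indicator_of_mem] at h1
      rcases mul_eq_zero.1 h1 with h | h
      · have : c p t < a := htA
        linarith
      · exact (div_ne_zero hne hAr.ne') h
    simpa [ae_iff] using this
  have hgz := (integral_eq_zero_iff_of_nonneg_ae hg0 (Lp_integrable g)).1 hβz
  filter_upwards [hgz, hgae] with t h1 h2 h3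
  have htB : t ∈ B := h3
  rw [h2, Set.indicator_of_mem htB] at h1
  exact h1

/-- **Complementarity reformulation of the variational inequality constraint.**
For nonnegative `L²` costs `c p` (e.g. the tolled effective delays evaluated at a
fixed `h*`), `h* ∈ Λ₀` solves the variational inequality iff there exist
multipliers `μ_{ij}` (one per OD pair) such that for every OD pair `w` and every
path `p` connecting `w`: `c_p(t) - μ_w ≥ 0` a.e. and `(c_p(t) - μ_w)·h*_p(t) = 0`
a.e. on `[t0, tf]`. -/
theorem vi_iff_complementarity
    (t0 tf : ℝ) (ht : t0 < tf)
    (W ι : Type) [Fintype W] [Nonempty W] [DecidableEq W] [Fintype ι]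
    (od : ι → W) (hod : Function.Surjective od)
    (Q : W → ℝ) (hQ : ∀ w, 0 ≤ Q w)
    (hstar : PiLp 2 fun _ : ι => Lp ℝ 2 (timeMeasure t0 tf))
    (hmem : hstar ∈ Lambda0 t0 tf od Q)
    (c : ι → Lp ℝ 2 (timeMeasure t0 tf))
    (hc : ∀ p, ∀ᵐ t ∂(timeMeasure t0 tf), 0 ≤ (c p) t) :
    (∀ h ∈ Lambda0 t0 tf od Q,
        0 ≤ ∑ p, ∫ t, (c p) t * ((h p) t - (hstar p) t) ∂(timeMeasure t0 tf)) ↔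
    (∃ μ : W → ℝ, ∀ p,
        (∀ᵐ t ∂(timeMeasure t0 tf), 0 ≤ (c p) t - μ (od p)) ∧
        (∀ᵐ t ∂(timeMeasure t0 tf), ((c p) t - μ (od p)) * (hstar p) t = 0)) := by
  have hne : (timeMeasure t0 tf) ≠ 0 := by
    intro h
    have h2 : timeMeasure t0 tf Set.univ = 0 := by rw [h]; rfl
    simp [timeMeasure] at h2
    linarith
  haveI : (ae (timeMeasure t0 tf)).NeBot := ae_neBot.2 hne
  constructor
  · intro hVI
    let S : W → Set ℝ := fun w =>
      {a | ∀ p, od p = w → ∀ᵐ t ∂(timeMeasure t0 tf), a ≤ c p t}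
    have hS0 : ∀ w, (S w).Nonempty := fun w => ⟨0, fun p _ => hc p⟩
    have hSb : ∀ w, BddAbove (S w) := by
      intro w
      obtain ⟨p, hp⟩ := hod w
      have : ∃ n : ℕ, ¬ ∀ᵐ t ∂(timeMeasure t0 tf), (n : ℝ) ≤ c p t := by
        by_contra! hcon
        obtain ⟨t, ht⟩ := (ae_all_iff.2 hcon).exists
        obtain ⟨n, hn⟩ := exists_nat_gt (c p t)
        exact absurd (ht n) (not_le.2 hn)
      obtain ⟨n, hn⟩ := this
      refine ⟨n, fun a ha => ?_⟩
      by_contra! hlt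
      apply hn
      filter_upwards [ha p hp] with t h1
      linarith
    have hlow : ∀ p, ∀ᵐ t ∂(timeMeasure t0 tf), sSup (S (od p)) ≤ c p t := by
      intro p
      have : ∀ n : ℕ, ∀ᵐ t ∂(timeMeasure t0 tf), sSup (S (od p)) - 1 / ((n : ℝ) + 1) ≤ c p t := by
        intro n
        have hpos : (0 : ℝ) < 1 / ((n : ℝ) + 1) := by positivity
        obtain ⟨a, ha, hlt⟩ := exists_lt_of_lt_csSup (hS0 (od p)) (sub_lt_self (sSup (S (od p))) hpos)
        filter_upwards [ha p rfl] with t h1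
        linarith
      filter_upwards [ae_all_iff.2 this] with t h1
      by_contra! hlt
      obtain ⟨n, hn⟩ := exists_nat_one_div_lt (sub_pos.2 hlt)
      have := h1 n
      linarith
    refine ⟨fun w => sSup (S w), fun q => ⟨?_, ?_⟩⟩
    · filter_upwards [hlow q] with t h1
      linarith
    · have : ∀ n : ℕ, ∀ᵐ t ∂(timeMeasure t0 tf),
          sSup (S (od q)) + 1 / ((n : ℝ) + 1) ≤ c q t → hstar q t = 0 := by
        intro n
        have hpos : (0 : ℝ) < 1 / ((n : ℝ) + 1) := by positivity
        have hnot : sSup (S (od q)) + 1 / ((n : ℝ) + 1) ∉ S (od q) := by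
          intro hin
          have := le_csSup (hSb (od q)) hin
          linarith
        have : ∃ p, od p = od q ∧ ¬ ∀ᵐ t ∂(timeMeasure t0 tf),
            sSup (S (od q)) + 1 / ((n : ℝ) + 1) ≤ c p t := by
          by_contra! hcon
          exact hnot hcon
        obtain ⟨p, hp, hpn⟩ := this
        exact key_claim hmem hVI hp _ hpn
      filter_upwards [ae_all_iff.2 this, hlow q] with t h1 h2
      rcases h2.eq_or_lt with h | h
      · simp [← h]
      · obtain ⟨n, hn⟩ := exists_nat_one_div_lt (sub_pos.2 h)
        rw [h1 n (by linarith), mul_zero]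
  · rintro ⟨μ, hμ⟩ h hh
    have e : ∀ p, μ (od p) * (∫ t, h p t ∂(timeMeasure t0 tf)
        - ∫ t, hstar p t ∂(timeMeasure t0 tf)) ≤
        ∫ t, (c p) t * ((h p) t - (hstar p) t) ∂(timeMeasure t0 tf) := by
      intro p
      rw [← integral_sub (Lp_integrable _) (Lp_integrable _), ← integral_const_mul]
      apply integral_mono_ae
      · exact ((Lp_integrable _).sub (Lp_integrable _)).const_mul _
      · simp only [mul_sub]
        exact (Lp_mul_integrable _ _).sub (Lp_mul_integrable _ _)
      · filter_upwards [(hμ p).1, (hμ p).2, hh.1 p] with t h1 h2 h3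
        nlinarith [mul_nonneg h1 h3]
    refine le_trans (le_of_eq ?_) (Finset.sum_le_sum fun p _ => e p)
    rw [← Finset.sum_fiberwise Finset.univ od]
    symm
    apply Finset.sum_eq_zero
    intro w _
    have : ∀ p ∈ Finset.univ.filter (fun p => od p = w),
        μ (od p) * (∫ t, h p t ∂(timeMeasure t0 tf) - ∫ t, hstar p t ∂(timeMeasure t0 tf)) =
        μ w * (∫ t, h p t ∂(timeMeasure t0 tf) - ∫ t, hstar p t ∂(timeMeasure t0 tf)) := by
      intro p hp
      rw [(Finset.mem_filter.1 hp).2]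
    rw [Finset.sum_congr rfl this, ← Finset.mul_sum, Finset.sum_sub_distrib, hh.2 w, hmem.2 w]
    simp
end
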